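/- arXiv:math/9906072 — 2 statements merged into one kernel-verified Lean document; each statement's English description precedes it below -/
import Mathlib

section
/- Let T be a bounded operator on a Hilbert space H such that 0 is in the left resolvent set of T (i.e., T has a bounded left inverse). Then dist(0, σ_ℓ(T)) = sup{ 1/r(S) : S ∈ L(H), ST = I }, where σ_ℓ(T) is the left spectrum of T and r(S) is the spectral radius of S. -/
section helpers

open Finset ComplexConjugate

variable {H : Type*} [NormedAddCommGroup H] [InnerProductSpace ℂ H]

theorem aux_orth {N : ℕ} {w : ℂ} (hw : IsPrimitiveRoot w N) (hN : N ≠ 0) {k l : ℕ}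
    (hk : k < N) (hl : l < N) :
    ∑ j ∈ range N, conj (w ^ (j * k)) * w ^ (j * l) = if k = l then (N : ℂ) else 0 := by
  have hnorm : ‖w‖ = 1 := hw.norm'_eq_one hN
  have hcw : conj w * w = 1 := by
    rw [← Complex.normSq_eq_conj_mul_self, Complex.normSq_eq_norm_sq, hnorm]; simp
  have hterm : ∀ j, conj (w ^ (j * k)) * w ^ (j * l) = ((conj w) ^ k * w ^ l) ^ j := by
    intro j
    rw [map_pow, mul_pow, ← pow_mul, ← pow_mul, mul_comm k j, mul_comm l j]
  simp_rw [hterm]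
  split_ifs with h
  · subst h
    rw [← mul_pow, hcw]; simp
  · have h1 : (conj w) ^ k * w ^ l ≠ 1 := by
      intro h1
      apply h
      apply hw.pow_inj hk hl
      calc w ^ k = w ^ k * ((conj w) ^ k * w ^ l) := by rw [h1, mul_one]
        _ = (conj w * w) ^ k * w ^ l := by rw [mul_pow]; ring
        _ = w ^ l := by rw [hcw]; simp
    have h2 : ((conj w) ^ k * w ^ l) ^ N = 1 := by
      have : w ^ N = 1 := hw.pow_eq_one
      rw [mul_pow, ← pow_mul, ← pow_mul, mul_comm k, mul_comm l, pow_mul, pow_mul, ← map_pow, this]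
      simp
    have h3 := mul_geom_sum ((conj w) ^ k * w ^ l) N
    rw [h2, sub_self] at h3
    exact (mul_eq_zero.mp h3).resolve_left (sub_ne_zero.mpr h1)

theorem aux_parseval {N : ℕ} {w : ℂ} (hw : IsPrimitiveRoot w N) (hN : N ≠ 0) (y : ℕ → H) :
    ∑ j ∈ range N, ‖∑ k ∈ range N, w ^ (j * k) • y k‖ ^ 2 = N * ∑ k ∈ range N, ‖y k‖ ^ 2 := by
  have key : ((∑ j ∈ range N, ‖∑ k ∈ range N, w ^ (j * k) • y k‖ ^ 2 : ℝ) : ℂ)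
      = ((N * ∑ k ∈ range N, ‖y k‖ ^ 2 : ℝ) : ℂ) := by
    push_cast
    calc ∑ j ∈ range N, (‖∑ k ∈ range N, w ^ (j * k) • y k‖ : ℂ) ^ 2
        = ∑ j ∈ range N, ∑ k ∈ range N, ∑ l ∈ range N,
            (conj (w ^ (j * k)) * w ^ (j * l)) * inner ℂ (y k) (y l) := by
          refine sum_congr rfl fun j _ => ?_
          have := inner_self_eq_norm_sq_to_K (𝕜 := ℂ) (∑ k ∈ range N, w ^ (j * k) • y k)
          refine this.symm.trans ?_
          rw [sum_inner]
          refine sum_congr rfl fun k _ => ?_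
          rw [inner_sum]
          refine sum_congr rfl fun l _ => ?_
          rw [inner_smul_left, inner_smul_right]; ring
      _ = ∑ k ∈ range N, ∑ l ∈ range N, (∑ j ∈ range N,
            (conj (w ^ (j * k)) * w ^ (j * l))) * inner ℂ (y k) (y l) := by
          rw [sum_comm]
          refine sum_congr rfl fun k _ => ?_
          rw [sum_comm]
          refine sum_congr rfl fun l _ => ?_
          rw [sum_mul]
      _ = ∑ k ∈ range N, (N : ℂ) * (‖y k‖ : ℂ) ^ 2 := by
          refine sum_congr rfl fun k hk => ?_
          rw [sum_eq_single_of_mem k hk]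
          · rw [aux_orth hw hN (mem_range.mp hk) (mem_range.mp hk), if_pos rfl]
            congr 1
            exact inner_self_eq_norm_sq_to_K (𝕜 := ℂ) (y k)
          · intro l hl hlk
            rw [aux_orth hw hN (mem_range.mp hk) (mem_range.mp hl), if_neg (Ne.symm hlk), zero_mul]
      _ = _ := by rw [mul_sum]
  exact_mod_cast key

theorem aux_circle (A : H →L[ℂ] H) (c : ℝ) (hc : 0 ≤ c)
    (hA : ∀ z : ℂ, ‖z‖ = 1 → ∀ x, c * ‖x‖ ≤ ‖(z • (1 : H →L[ℂ] H) - A) x‖) (n : ℕ) (x : H) :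
    c ^ 2 * ∑ k ∈ range n, ‖(A ^ k) x‖ ^ 2 ≤ ‖x‖ ^ 2 + ‖(A ^ n) x‖ ^ 2 := by
  rcases Nat.eq_zero_or_pos n with rfl | hn
  · simp
  have hN : n + 1 ≠ 0 := by omega
  obtain ⟨w, hw⟩ : ∃ w : ℂ, IsPrimitiveRoot w (n + 1) := ⟨_, Complex.isPrimitiveRoot_exp _ hN⟩
  have hnorm : ‖w‖ = 1 := hw.norm'_eq_one hN
  have P1 := aux_parseval hw hN (fun i => if i < n then (A ^ (n - 1 - i)) x else 0)
  have P2 := aux_parseval hw hN (fun i => if i = n then x else if i = 0 then -(A ^ n) x else 0)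
  have e1 : ∑ k ∈ range (n + 1), ‖(if k < n then (A ^ (n - 1 - k)) x else 0 : H)‖ ^ 2
      = ∑ k ∈ range n, ‖(A ^ k) x‖ ^ 2 := by
    rw [sum_range_succ, ← sum_range_reflect (fun k => ‖(A ^ k) x‖ ^ 2)]
    simp only [lt_irrefl, if_false, norm_zero]
    rw [zero_pow two_ne_zero, add_zero]
    refine sum_congr rfl fun k hk => ?_
    rw [if_pos (mem_range.mp hk)]
  have e2 : ∑ k ∈ range (n + 1), ‖(if k = n then x else if k = 0 then -(A ^ n) x else 0 : H)‖ ^ 2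
      = ‖x‖ ^ 2 + ‖(A ^ n) x‖ ^ 2 := by
    rw [sum_range_succ, if_pos rfl, add_comm]
    congr 1
    rw [sum_eq_single_of_mem 0 (mem_range.mpr hn)]
    · rw [if_neg (by omega), if_pos rfl, norm_neg]
    · intro b hb hb0
      rw [if_neg (by have := mem_range.mp hb; omega), if_neg hb0]; simp
  rw [e1] at P1
  rw [e2] at P2
  have hle : c ^ 2 * ∑ j ∈ range (n + 1), ‖∑ k ∈ range (n + 1),
        w ^ (j * k) • (if k < n then (A ^ (n - 1 - k)) x else 0 : H)‖ ^ 2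
      ≤ ∑ j ∈ range (n + 1), ‖∑ k ∈ range (n + 1),
        w ^ (j * k) • (if k = n then x else if k = 0 then -(A ^ n) x else 0 : H)‖ ^ 2 := by
    rw [mul_sum]
    refine sum_le_sum fun j _ => ?_
    rw [← mul_pow]
    refine pow_le_pow_left₀ (by positivity) ?_ 2
    have hz : ‖w ^ j‖ = 1 := by rw [norm_pow, hnorm, one_pow]
    refine (hA _ hz _).trans (le_of_eq ?_)
    congr 1
    have f1 : ∑ k ∈ range (n + 1), w ^ (j * k) • (if k < n then (A ^ (n - 1 - k)) x else 0 : H)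
        = (∑ i ∈ range n, ((w ^ j) • (1 : H →L[ℂ] H)) ^ i * A ^ (n - 1 - i)) x := by
      rw [sum_range_succ, if_neg (lt_irrefl n), smul_zero, add_zero]
      rw [_root_.sum_apply]
      refine sum_congr rfl fun k hk => ?_
      rw [if_pos (mem_range.mp hk), smul_pow, one_pow, smul_mul_assoc, one_mul, ← pow_mul]
      rfl
    have f2 : ∑ k ∈ range (n + 1), w ^ (j * k) •
          (if k = n then x else if k = 0 then -(A ^ n) x else 0 : H)
        = (w ^ j) ^ n • x - (A ^ n) x := by
      rw [sum_range_succ, if_pos rfl, sum_eq_single_of_mem 0 (mem_range.mpr hn)]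
      · rw [if_neg (by omega), if_pos rfl, ← pow_mul]; simp [sub_eq_add_neg, add_comm]
      · intro b hb hb0
        rw [if_neg (by have := mem_range.mp hb; omega), if_neg hb0]; simp
    rw [f1, f2, ← mul_apply_eq_comp]
    have hcomm : Commute ((w ^ j) • (1 : H →L[ℂ] H)) A := (Commute.one_left A).smul_left _
    rw [hcomm.mul_geom_sum₂ n, smul_pow, one_pow]
    rfl
  rw [P1, P2] at hle
  have hpos : (0 : ℝ) < ((n + 1 : ℕ) : ℝ) := by positivity
  refine le_of_mul_le_mul_left ?_ hpos
  calc _ = c ^ 2 * (((n + 1 : ℕ) : ℝ) * ∑ k ∈ range n, ‖(A ^ k) x‖ ^ 2) := by ring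
    _ ≤ _ := hle

theorem aux_seq (v : ℕ → ℝ) (hv : ∀ k, 0 ≤ v k) (κ : ℝ) (hκ1 : κ ≤ 1) (n : ℕ)
    (h : ∀ m ≤ n, κ * ∑ k ∈ Ico m n, v k ≤ v m + v n) (m : ℕ) (hm : m ≤ n) :
    κ * ∑ k ∈ Ico m n, v k ≤ (1 - κ) ^ m * (v 0 + v n) + v n := by
  induction m with
  | zero =>
    have := h 0 (Nat.zero_le n)
    have := hv n
    rw [pow_zero]
    linarith
  | succ m ih =>
    have h1 := ih (by omega)
    have h2 := h m (by omega)
    rw [sum_eq_sum_Ico_succ_bot (by omega : m < n)] at h1 h2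
    have h3 := mul_le_mul_of_nonneg_left h1 (sub_nonneg.mpr hκ1)
    rw [pow_succ]
    by_cases hκ0 : 0 ≤ κ
    · nlinarith [mul_le_mul_of_nonneg_left h2 hκ0]
    · have h4 : 0 ≤ ∑ k ∈ Ico (m+1) n, v k := sum_nonneg fun k _ => hv k
      have h5 : κ * ∑ k ∈ Ico (m+1) n, v k ≤ 0 := mul_nonpos_of_nonpos_of_nonneg (by linarith) h4
      have h6 : 0 ≤ (1 - κ) ^ m * (1 - κ) * (v 0 + v n) := by
        have := hv 0
        have := hv n
        have : 0 ≤ 1 - κ := by linarith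
        positivity
      linarith [hv n]

/-- `T ^ n` is bounded below by `s ^ n` for some `n ≥ 1`. -/
def auxG (T : H →L[ℂ] H) (s : ℝ) : Prop :=
  ∃ n : ℕ, 1 ≤ n ∧ ∀ x, s ^ n * ‖x‖ ≤ ‖(T ^ n) x‖

theorem aux_pow_mul (T : H →L[ℂ] H) (r : ℝ) (hr : 0 ≤ r) (n : ℕ)
    (h : ∀ x, r ^ n * ‖x‖ ≤ ‖(T ^ n) x‖) (j : ℕ) (x : H) :
    r ^ (n * j) * ‖x‖ ≤ ‖(T ^ (n * j)) x‖ := by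
  induction j with
  | zero => simp
  | succ j ih =>
    have e : (T ^ (n * (j + 1))) x = (T ^ n) ((T ^ (n * j)) x) := by
      rw [Nat.mul_succ, add_comm, pow_add]; rfl
    rw [e]
    refine le_trans ?_ (h _)
    rw [Nat.mul_succ, add_comm, pow_add, mul_assoc]
    exact mul_le_mul_of_nonneg_left ih (by positivity)

theorem aux_step (T : H →L[ℂ] H) (c d α t : ℝ) (hc : 0 < c) (hcd : c ≤ d)
    (hT : ∀ z : ℂ, ‖z‖ ≤ d → ∀ x, c * ‖x‖ ≤ ‖(z • (1 : H →L[ℂ] H) - T) x‖)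
    (ht : 0 < t) (htd : t ≤ d) (hα : 0 < α) (hα1 : α < 1) (hκα : 1 - (c / d) ^ 2 < α ^ 6)
    (hG : auxG T (α ^ 3 * t)) : auxG T (α ^ 2 * t) := by
  by_contra hcon
  obtain ⟨n0, hn0, h0⟩ := hG
  have hd : 0 < d := hc.trans_le hcd
  set κ := (c / d) ^ 2 with hκ
  have hκ0 : 0 < κ := by positivity
  have hκ1 : κ ≤ 1 := by
    have : c / d ≤ 1 := (div_le_one hd).mpr hcd
    exact pow_le_one₀ (by positivity) this
  set A : H →L[ℂ] H := ((t⁻¹ : ℝ) : ℂ) • T with hAdef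
  have hApow : ∀ k x, ‖(A ^ k) x‖ = t⁻¹ ^ k * ‖(T ^ k) x‖ := by
    intro k x
    rw [hAdef, smul_pow, smul_apply, norm_smul, norm_pow, Complex.norm_real,
      Real.norm_of_nonneg (by positivity)]
  have hA : ∀ z : ℂ, ‖z‖ = 1 → ∀ x, (c / d) * ‖x‖ ≤ ‖(z • (1 : H →L[ℂ] H) - A) x‖ := by
    intro z hz x
    have h1 := hT ((t : ℂ) * z) (by rw [norm_mul, hz, Complex.norm_real,
      Real.norm_of_nonneg ht.le, mul_one]; exact htd) x
    have h2 : (z • (1 : H →L[ℂ] H) - A) x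
        = ((t⁻¹ : ℝ) : ℂ) • (((t : ℂ) * z) • (1 : H →L[ℂ] H) - T) x := by
      have : ((t⁻¹ : ℝ) : ℂ) * ((t : ℂ) * z) = z := by
        have : (t : ℂ) ≠ 0 := by exact_mod_cast ht.ne'
        push_cast; field_simp
      simp only [hAdef, sub_apply, smul_apply, smul_sub, smul_smul, this]
    rw [h2, norm_smul, Complex.norm_real, Real.norm_of_nonneg (by positivity)]
    calc c / d * ‖x‖ = d⁻¹ * (c * ‖x‖) := by field_simp
      _ ≤ t⁻¹ * (c * ‖x‖) := by gcongr
      _ ≤ _ := by gcongr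
  have main : ∀ j : ℕ, κ ≤ 2 * ((1 - κ) / α ^ 6) ^ (n0 * (j + 1)) + (α ^ 2) ^ (n0 * (j + 1)) := by
    intro j
    set m := n0 * (j + 1) with hm
    have hm1 : 1 ≤ m := Nat.one_le_iff_ne_zero.mpr (by positivity)
    have : ∃ x, ‖(T ^ (2 * m)) x‖ < (α ^ 2 * t) ^ (2 * m) * ‖x‖ := by
      by_contra! hx
      exact hcon ⟨2 * m, by omega, hx⟩
    obtain ⟨x, hx⟩ := this
    have hx0 : 0 < ‖x‖ := by
      rcases (norm_nonneg x).eq_or_lt with h | h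
      · rw [← h, mul_zero] at hx
        exact absurd hx (not_lt.mpr (norm_nonneg _))
      · exact h
    have hseq := aux_seq (fun k => ‖(A ^ k) x‖ ^ 2) (fun k => by positivity) κ hκ1 (2 * m) (by
      intro p hp
      have := aux_circle A (c / d) (by positivity) hA (2 * m - p) ((A ^ p) x)
      rw [sum_Ico_eq_sum_range]
      have e : ∀ k, (A ^ k) ((A ^ p) x) = (A ^ (p + k)) x := by
        intro k; rw [add_comm, pow_add]; rfl
      simp only [e] at this
      rwa [Nat.add_sub_cancel' hp] at this) m (by omega)
    have hlow : κ * ‖(A ^ m) x‖ ^ 2 ≤ κ * ∑ k ∈ Ico m (2 * m), ‖(A ^ k) x‖ ^ 2 := by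
      refine mul_le_mul_of_nonneg_left ?_ hκ0.le
      exact single_le_sum (f := fun k => ‖(A ^ k) x‖ ^ 2) (fun k _ => by positivity)
        (mem_Ico.mpr ⟨le_rfl, by omega⟩)
    have hm' := aux_pow_mul T (α ^ 3 * t) (by positivity) n0 h0 (j + 1) x
    rw [← hm] at hm'
    have hAm : (α ^ 3) ^ m * ‖x‖ ≤ ‖(A ^ m) x‖ := by
      rw [hApow]
      calc (α ^ 3) ^ m * ‖x‖ = t⁻¹ ^ m * ((α ^ 3 * t) ^ m * ‖x‖) := by
            rw [mul_pow, inv_pow]; field_simp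
        _ ≤ _ := by gcongr
    have hAn : ‖(A ^ (2 * m)) x‖ ≤ (α ^ 2) ^ (2 * m) * ‖x‖ := by
      rw [hApow]
      calc _ ≤ t⁻¹ ^ (2 * m) * ((α ^ 2 * t) ^ (2 * m) * ‖x‖) := by gcongr
        _ = _ := by rw [mul_pow, inv_pow]; field_simp
    have hAm2 : (α ^ 6) ^ m * ‖x‖ ^ 2 ≤ ‖(A ^ m) x‖ ^ 2 := by
      calc (α ^ 6) ^ m * ‖x‖ ^ 2 = ((α ^ 3) ^ m * ‖x‖) ^ 2 := by ring
        _ ≤ _ := by gcongr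
    have hAn2 : ‖(A ^ (2 * m)) x‖ ^ 2 ≤ (α ^ 6) ^ m * (α ^ 2) ^ m * ‖x‖ ^ 2 := by
      calc _ ≤ ((α ^ 2) ^ (2 * m) * ‖x‖) ^ 2 := by gcongr
        _ = _ := by ring
    have hAn3 : ‖(A ^ (2 * m)) x‖ ^ 2 ≤ ‖x‖ ^ 2 := by
      refine hAn2.trans ?_
      have h1 : (α ^ 6) ^ m ≤ 1 := pow_le_one₀ (by positivity) (pow_le_one₀ hα.le hα1.le)
      have h2 : (α ^ 2) ^ m ≤ 1 := pow_le_one₀ (by positivity) (pow_le_one₀ hα.le hα1.le)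
      have h3 : (α ^ 6) ^ m * (α ^ 2) ^ m ≤ 1 := mul_le_one₀ h1 (by positivity) h2
      nlinarith [sq_nonneg ‖x‖]
    have h1κ : 0 ≤ (1 - κ) ^ m := pow_nonneg (by linarith) m
    simp only [pow_zero, one_apply_eq_self] at hseq
    have fin : (κ * (α ^ 6) ^ m) * ‖x‖ ^ 2
        ≤ (2 * (1 - κ) ^ m + (α ^ 6) ^ m * (α ^ 2) ^ m) * ‖x‖ ^ 2 := by
      have a1 := mul_le_mul_of_nonneg_left hAm2 hκ0.le
      have a2 := mul_le_mul_of_nonneg_left hAn3 h1κ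
      nlinarith
    have fin2 := le_of_mul_le_mul_right fin (by positivity)
    have hp : 0 < (α ^ 6) ^ m := by positivity
    refine le_of_mul_le_mul_right (fin2.trans (le_of_eq ?_)) hp
    rw [div_pow]; field_simp
  have hlim : Filter.Tendsto (fun j : ℕ => 2 * ((1 - κ) / α ^ 6) ^ (n0 * (j + 1))
      + (α ^ 2) ^ (n0 * (j + 1))) Filter.atTop (nhds (2 * 0 + 0)) := by
    have hsub : Filter.Tendsto (fun j : ℕ => n0 * (j + 1)) Filter.atTop Filter.atTop := by
      refine Filter.tendsto_atTop_mono (fun j => ?_) Filter.tendsto_id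
      simp only [id]; nlinarith
    refine Filter.Tendsto.add (Filter.Tendsto.const_mul _ ?_) ?_
    · refine (tendsto_pow_atTop_nhds_zero_of_lt_one ?_ ?_).comp hsub
      · exact div_nonneg (by linarith) (by positivity)
      · rw [div_lt_one (by positivity)]; exact hκα
    · exact (tendsto_pow_atTop_nhds_zero_of_lt_one (by positivity)
        (pow_lt_one₀ hα.le hα1 two_ne_zero)).comp hsub
  have := ge_of_tendsto' hlim main
  linarith

theorem aux_G_mono (T : H →L[ℂ] H) {s r : ℝ} (hs : 0 ≤ s) (hsr : s ≤ r) (h : auxG T r) :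
    auxG T s := by
  obtain ⟨n, hn, h⟩ := h
  refine ⟨n, hn, fun x => le_trans ?_ (h x)⟩
  gcongr

theorem aux_G (T : H →L[ℂ] H) (c d d' : ℝ) (hc : 0 < c) (hcd : c ≤ d)
    (hT : ∀ z : ℂ, ‖z‖ ≤ d → ∀ x, c * ‖x‖ ≤ ‖(z • (1 : H →L[ℂ] H) - T) x‖)
    (hd' : 0 < d') (hdd : d' < d) : auxG T d' := by
  have hd : 0 < d := hc.trans_le hcd
  obtain ⟨α, hα, hα1, h6, h3⟩ : ∃ α : ℝ, 0 < α ∧ α < 1 ∧ 1 - (c / d) ^ 2 < α ^ 6 ∧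
      d' / d < α ^ 3 := by
    have l6 : Filter.Tendsto (fun α : ℝ => α ^ 6) (nhdsWithin 1 (Set.Iio 1)) (nhds 1) := by
      have : ContinuousWithinAt (fun α : ℝ => α ^ 6) (Set.Iio 1) 1 := by fun_prop
      simpa [ContinuousWithinAt] using this
    have l3 : Filter.Tendsto (fun α : ℝ => α ^ 3) (nhdsWithin 1 (Set.Iio 1)) (nhds 1) := by
      have : ContinuousWithinAt (fun α : ℝ => α ^ 3) (Set.Iio 1) 1 := by fun_prop
      simpa [ContinuousWithinAt] using this
    have b6 : 1 - (c / d) ^ 2 < 1 := by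
      have : 0 < (c / d) ^ 2 := by positivity
      linarith
    have b3 : d' / d < 1 := (div_lt_one hd).mpr hdd
    have b0 : ∀ᶠ α : ℝ in nhdsWithin 1 (Set.Iio 1), 0 < α :=
      Filter.Eventually.filter_mono nhdsWithin_le_nhds (lt_mem_nhds one_pos)
    obtain ⟨α, h⟩ := ((b0.and (eventually_mem_nhdsWithin)).and
      ((l6.eventually_const_lt b6).and (l3.eventually_const_lt b3))).exists
    exact ⟨α, h.1.1, h.1.2, h.2.1, h.2.2⟩
  have hα3 : 0 < α ^ 3 := by positivity
  have key : ∀ j : ℕ, auxG T d' ∨ auxG T (c / α ^ j) := by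
    intro j
    induction j with
    | zero =>
      right
      refine ⟨1, le_rfl, fun x => ?_⟩
      have := hT 0 (by simpa using hd.le) x
      simpa using this
    | succ j ih =>
      rcases ih with h | h
      · exact Or.inl h
      rcases le_total d' (c / α ^ j) with h' | h'
      · exact Or.inl (aux_G_mono T hd'.le h' h)
      right
      have hs := aux_step T c d α (c / α ^ j / α ^ 3) hc hcd hT (by positivity) (by
        rw [div_le_iff₀ hα3]
        rw [div_lt_iff₀ hd] at h3
        linarith) hα hα1 h6 (by
          have : α ^ 3 * (c / α ^ j / α ^ 3) = c / α ^ j := by field_simp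
          rwa [this])
      have e : α ^ 2 * (c / α ^ j / α ^ 3) = c / α ^ (j + 1) := by
        rw [pow_succ]; field_simp; ring
      rwa [e] at hs
  obtain ⟨j, hj⟩ := exists_pow_lt_of_lt_one (show 0 < c / d' by positivity) hα1
  rcases key j with h | h
  · exact h
  · refine aux_G_mono T hd'.le ?_ h
    rw [le_div_iff₀ (by positivity)]
    rw [lt_div_iff₀ hd'] at hj
    linarith

theorem aux_compact (T : H →L[ℂ] H) (d : ℝ)
    (h : ∀ z : ℂ, ‖z‖ ≤ d → ∃ L : H →L[ℂ] H, L * (z • (1 : H →L[ℂ] H) - T) = 1) :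
    ∃ c : ℝ, 0 < c ∧ ∀ z : ℂ, ‖z‖ ≤ d → ∀ x, c * ‖x‖ ≤ ‖(z • (1 : H →L[ℂ] H) - T) x‖ := by
  have key : ∃ c : ℝ, 0 < c ∧ ∀ z ∈ Metric.closedBall (0 : ℂ) d,
      ∀ x, c * ‖x‖ ≤ ‖(z • (1 : H →L[ℂ] H) - T) x‖ := by
    refine (isCompact_closedBall (0 : ℂ) d).induction_on
      (p := fun s => ∃ c : ℝ, 0 < c ∧ ∀ z ∈ s, ∀ x, c * ‖x‖ ≤ ‖(z • (1 : H →L[ℂ] H) - T) x‖)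
      ?_ ?_ ?_ ?_
    · exact ⟨1, one_pos, by simp⟩
    · rintro s t hst ⟨c, hc, h⟩
      exact ⟨c, hc, fun z hz => h z (hst hz)⟩
    · rintro s t ⟨c, hc, h⟩ ⟨c', hc', h'⟩
      refine ⟨min c c', lt_min hc hc', ?_⟩
      rintro z (hz | hz) x
      · exact (mul_le_mul_of_nonneg_right (min_le_left _ _) (norm_nonneg _)).trans (h z hz x)
      · exact (mul_le_mul_of_nonneg_right (min_le_right _ _) (norm_nonneg _)).trans (h' z hz x)
    · intro z hz
      obtain ⟨L, hL⟩ := h z (by simpa using hz)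
      have hb : ∀ x, (‖L‖ + 1)⁻¹ * ‖x‖ ≤ ‖(z • (1 : H →L[ℂ] H) - T) x‖ := by
        intro x
        have e : L ((z • (1 : H →L[ℂ] H) - T) x) = x := by
          rw [← mul_apply_eq_comp, hL]; rfl
        have h1 := L.le_opNorm ((z • (1 : H →L[ℂ] H) - T) x)
        rw [e] at h1
        rw [inv_mul_le_iff₀ (by positivity)]
        nlinarith [norm_nonneg ((z • (1 : H →L[ℂ] H) - T) x)]
      set γ := (‖L‖ + 1)⁻¹ with hγ
      have hγ0 : 0 < γ := by positivity
      refine ⟨Metric.ball z (γ / 2),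
        mem_nhdsWithin_of_mem_nhds (Metric.ball_mem_nhds _ (by positivity)), γ / 2, by positivity, ?_⟩
      intro w hw x
      have h2 : (z • (1 : H →L[ℂ] H) - T) x
          = (w • (1 : H →L[ℂ] H) - T) x - (w - z) • x := by
        simp [sub_smul]
      have h3 := hb x
      rw [h2] at h3
      have h4 := norm_sub_le ((w • (1 : H →L[ℂ] H) - T) x) ((w - z) • x)
      rw [norm_smul] at h4
      rw [Metric.mem_ball, dist_eq_norm] at hw
      nlinarith [norm_nonneg x]
  obtain ⟨c, hc, h⟩ := key
  exact ⟨c, hc, fun z hz => h z (by simpa using hz)⟩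

theorem aux_left_inv [CompleteSpace H] (B : H →L[ℂ] H) (d : ℝ) (hd : 0 < d)
    (hB : ∀ x, d * ‖x‖ ≤ ‖B x‖) : ∃ L : H →L[ℂ] H, L * B = 1 ∧ ‖L‖ ≤ d⁻¹ := by
  have hinj : Function.Injective B := by
    rw [injective_iff_map_eq_zero]
    intro x hx
    have := hB x
    rw [hx, norm_zero] at this
    exact norm_le_zero_iff.mp (by nlinarith [norm_nonneg x])
  have hanti : AntilipschitzWith (Real.toNNReal d⁻¹) B := by
    refine ContinuousLinearMap.antilipschitz_of_bound B fun x => ?_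
    rw [Real.coe_toNNReal _ (by positivity), inv_mul_eq_div, le_div_iff₀ hd, mul_comm]
    exact hB x
  have hcl : IsClosed (Set.range B) := hanti.isClosed_range B.uniformContinuous
  let K : Submodule ℂ H := LinearMap.range (B : H →ₗ[ℂ] H)
  have hK : IsClosed (K : Set H) := hcl
  have : CompleteSpace K := hK.completeSpace_coe
  let e : H ≃L[ℂ] K := ContinuousLinearMap.equivRange hinj hcl
  have he : ∀ x, ((e x : K) : H) = B x := fun x => rfl
  refine ⟨(e.symm : K →L[ℂ] H) ∘L K.orthogonalProjectionOnto, ?_, ?_⟩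
  · ext x
    have : K.orthogonalProjectionOnto (B x) = e x := by
      rw [← he x]; exact Submodule.orthogonalProjectionOnto_mem_subspace_eq_self (e x)
    simp [this]
  · refine ContinuousLinearMap.opNorm_le_bound _ (by positivity) fun x => ?_
    have h1 := hB (e.symm (K.orthogonalProjectionOnto x))
    rw [← he, ContinuousLinearEquiv.apply_symm_apply] at h1
    have h2 : ‖K.orthogonalProjectionOnto x‖ ≤ ‖x‖ := Submodule.norm_orthogonalProjectionOnto_apply_le K x
    rw [inv_mul_eq_div, le_div_iff₀ hd, mul_comm]
    exact h1.trans h2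

theorem aux_renorm [CompleteSpace H] (T : H →L[ℂ] H) (d : ℝ) (hd : 0 < d) (hG : auxG T d) :
    ∃ S : H →L[ℂ] H, S * T = 1 ∧ spectralRadius ℂ S ≤ ENNReal.ofReal d⁻¹ := by
  obtain ⟨n, hn, h⟩ := hG
  let J : ℕ → (H →L[ℂ] H) := fun k => ((d⁻¹ ^ k : ℝ) : ℂ) • T ^ k
  have hJ : ∀ k x, ‖J k x‖ = d⁻¹ ^ k * ‖(T ^ k) x‖ := by
    intro k x
    simp only [J]
    rw [smul_apply, norm_smul, Complex.norm_real, Real.norm_of_nonneg (by positivity)]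
  let G : H →L[ℂ] H := ∑ k ∈ range n, star (J k) * J k
  have hG1 : 1 ≤ G := by
    have h0 : star (J 0) * J 0 = 1 := by simp [J]
    rw [← h0]
    exact single_le_sum (f := fun k => star (J k) * J k) (fun k _ => star_mul_self_nonneg _)
      (mem_range.mpr hn)
  have hG0 : 0 ≤ G := zero_le_one.trans hG1
  have hGu : IsUnit G := CStarAlgebra.isUnit_of_le 1 hG1
  let P : H →L[ℂ] H := CFC.sqrt G
  have hPP : P * P = G := CFC.sqrt_mul_sqrt_self G hG0
  have hPs : star P = P := (IsSelfAdjoint.of_nonneg (CFC.sqrt_nonneg G))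
  have hPu : IsUnit P := by
    rw [← hPP, ← sq] at hGu
    exact (isUnit_pow_iff two_ne_zero).mp hGu
  have hPn : ∀ x, ‖P x‖ ^ 2 = ∑ k ∈ range n, (d⁻¹ ^ k * ‖(T ^ k) x‖) ^ 2 := by
    intro x
    have h1 : ∀ A : H →L[ℂ] H, (inner ℂ ((star A * A) x) x).re = ‖A x‖ ^ 2 := by
      intro A
      have := ContinuousLinearMap.apply_norm_sq_eq_inner_adjoint_left A x
      exact this.symm
    have h2 := h1 P
    rw [hPs, hPP] at h2
    rw [← h2]
    simp only [G]
    rw [_root_.sum_apply, sum_inner, Complex.re_sum]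
    refine sum_congr rfl fun k _ => ?_
    rw [h1, hJ]
  obtain ⟨u, hu⟩ := hPu
  have hineq : ∀ y, d * ‖P y‖ ≤ ‖P (T y)‖ := by
    intro y
    refine (pow_le_pow_iff_left₀ (by positivity) (norm_nonneg _) two_ne_zero).mp ?_
    rw [mul_pow, hPn, hPn]
    have e1 : ∀ k, (d⁻¹ ^ k * ‖(T ^ k) (T y)‖) ^ 2
        = d ^ 2 * (d⁻¹ ^ (k + 1) * ‖(T ^ (k + 1)) y‖) ^ 2 := by
      intro k
      have : (T ^ (k + 1)) y = (T ^ k) (T y) := by rw [pow_succ]; rfl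
      rw [this, inv_pow, inv_pow, pow_succ d k]; field_simp
    simp only [e1]
    rw [← mul_sum]
    refine mul_le_mul_of_nonneg_left ?_ (by positivity)
    have e2 := sum_range_succ (fun k => (d⁻¹ ^ k * ‖(T ^ k) y‖) ^ 2) n
    have e3 := sum_range_succ' (fun k => (d⁻¹ ^ k * ‖(T ^ k) y‖) ^ 2) n
    have e4 : (d⁻¹ ^ 0 * ‖(T ^ 0) y‖) ^ 2 ≤ (d⁻¹ ^ n * ‖(T ^ n) y‖) ^ 2 := by
      refine pow_le_pow_left₀ (by positivity) ?_ 2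
      simp only [pow_zero, one_mul, one_apply_eq_self]
      calc ‖y‖ = d⁻¹ ^ n * (d ^ n * ‖y‖) := by rw [inv_pow]; field_simp
        _ ≤ _ := by gcongr; exact h y
    linarith
  obtain ⟨L, hL, hLn⟩ := aux_left_inv ((u : H →L[ℂ] H) * T * ((u⁻¹ : (H →L[ℂ] H)ˣ) : H →L[ℂ] H)) d hd (by
    intro x
    have := hineq (((u⁻¹ : (H →L[ℂ] H)ˣ) : H →L[ℂ] H) x)
    rw [← hu, ← mul_apply_eq_comp, u.mul_inv] at this
    exact this)
  refine ⟨((u⁻¹ : (H →L[ℂ] H)ˣ) : H →L[ℂ] H) * L * (u : H →L[ℂ] H), ?_, ?_⟩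
  · have : L * u * T = u := by
      calc L * u * T = (L * ((u : H →L[ℂ] H) * T * ((u⁻¹ : (H →L[ℂ] H)ˣ) : H →L[ℂ] H))) * u := by
            simp [mul_assoc]
        _ = u := by rw [hL, one_mul]
    rw [mul_assoc, mul_assoc, ← mul_assoc L, this, u.inv_mul]
  · unfold spectralRadius
    rw [spectrum.units_conjugate']
    change spectralRadius ℂ L ≤ _
    rcases subsingleton_or_nontrivial H with hs | hs
    · have : spectrum ℂ L = ∅ := spectrum.of_subsingleton L
      unfold spectralRadius
      rw [this]; simp
    · refine (spectrum.spectralRadius_le_nnnorm L).trans ?_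
      rw [← enorm_eq_nnnorm, ← ofReal_norm]
      exact ENNReal.ofReal_le_ofReal hLn

end helpers

theorem dist_to_left_spectrum_eq_sup
    {H : Type*} [NormedAddCommGroup H] [InnerProductSpace ℂ H] [CompleteSpace H]
    [TopologicalSpace.SeparableSpace H]
    (T : H →L[ℂ] H) (hT : ∃ S : H →L[ℂ] H, S * T = 1) :
    EMetric.infEdist (0 : ℂ)
        {z : ℂ | ¬ ∃ L : H →L[ℂ] H, L * (z • (1 : H →L[ℂ] H) - T) = 1} =
      ⨆ S ∈ {S : H →L[ℂ] H | S * T = 1}, (spectralRadius ℂ S)⁻¹ := by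
  change Metric.infEDist (0 : ℂ)
        {z : ℂ | ¬ ∃ L : H →L[ℂ] H, L * (z • (1 : H →L[ℂ] H) - T) = 1} = _
  apply le_antisymm
  · refine le_of_forall_lt_imp_le_of_dense fun a ha => ?_
    rcases eq_or_ne a 0 with rfl | ha0
    · exact bot_le
    obtain ⟨b, hab, hb⟩ := exists_between ha
    have hbt : b ≠ ⊤ := hb.ne_top
    have hat : a ≠ ⊤ := hab.ne_top
    have ha' : 0 < a.toReal := ENNReal.toReal_pos ha0 hat
    have hab' : a.toReal < b.toReal := (ENNReal.toReal_lt_toReal hat hbt).mpr hab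
    obtain ⟨c, hc, hcT⟩ := aux_compact T b.toReal (by
      intro z hz
      by_contra hcon
      have h1 := Metric.infEDist_le_edist_of_mem (x := (0 : ℂ)) (y := z)
        (s := {z : ℂ | ¬ ∃ L : H →L[ℂ] H, L * (z • (1 : H →L[ℂ] H) - T) = 1}) hcon
      rw [edist_zero_left, ← enorm_eq_nnnorm, ← ofReal_norm] at h1
      have h2 : ENNReal.ofReal ‖z‖ ≤ b := ENNReal.ofReal_le_of_le_toReal hz
      exact absurd (h1.trans h2) (not_le.mpr hb))
    have hG : auxG T a.toReal := aux_G T (min c b.toReal) b.toReal a.toReal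
      (lt_min hc (ha'.trans hab')) (min_le_right _ _) (fun z hz x =>
        (mul_le_mul_of_nonneg_right (min_le_left _ _) (norm_nonneg _)).trans (hcT z hz x)) ha' hab'
    obtain ⟨S, hS, hr⟩ := aux_renorm T a.toReal ha' hG
    refine le_trans ?_ (le_iSup₂ (f := fun (S : H →L[ℂ] H) (_ : S ∈ {S : H →L[ℂ] H | S * T = 1}) =>
      (spectralRadius ℂ S)⁻¹) S hS)
    rw [ENNReal.le_inv_iff_le_inv]
    refine hr.trans (le_of_eq ?_)
    rw [ENNReal.ofReal_inv_of_pos ha', ENNReal.ofReal_toReal hat]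
  · refine iSup₂_le fun S hS => ?_
    rw [Metric.le_infEDist]
    intro z hz
    by_contra hcon
    rw [not_le, edist_zero_left] at hcon
    obtain ⟨u, hu⟩ := spectrum.isUnit_one_sub_smul_of_lt_inv_radius hcon
    apply hz
    refine ⟨-(((u⁻¹ : (H →L[ℂ] H)ˣ) : H →L[ℂ] H) * S), ?_⟩
    have hS' : S * T = 1 := hS
    have : S * (z • (1 : H →L[ℂ] H) - T) = -(u : H →L[ℂ] H) := by
      rw [hu, mul_sub, hS', mul_smul_comm, mul_one, neg_sub]
    rw [neg_mul, mul_assoc, this, mul_neg, neg_neg, u.inv_mul]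
end

section
/- Let T ∈ L(H) be left invertible and set s(T) = sup{1/r(S) : S T = I}. Then s(Tⁿ) = s(T)ⁿ for all n ≥ 1. -/
open Filter Topology ENNReal

lemma aux_radius {H : Type*} [NormedAddCommGroup H] [InnerProductSpace ℂ H] [CompleteSpace H]
    (L : H →L[ℂ] H) (C c : ℝ) (hC : 0 < C) (hc : 0 < c)
    (h : ∀ k : ℕ, ‖L ^ k‖ ≤ C * c ^ k) : spectralRadius ℂ L ≤ ENNReal.ofReal c := by
  have h1 := spectrum.pow_norm_pow_one_div_tendsto_nhds_spectralRadius L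
  have h2 : Tendsto (fun k : ℕ => ENNReal.ofReal (C ^ (1 / k : ℝ) * c)) atTop
      (𝓝 (ENNReal.ofReal c)) := by
    apply ENNReal.tendsto_ofReal
    have h3 : Tendsto (fun k : ℕ => C ^ (1 / k : ℝ)) atTop (𝓝 (C ^ (0 : ℝ))) :=
      ((Real.continuousAt_const_rpow hC.ne').tendsto).comp tendsto_one_div_atTop_nhds_zero_nat
    have h4 := h3.mul_const c
    simpa using h4
  refine le_of_tendsto_of_tendsto h1 h2 ?_
  filter_upwards [eventually_ge_atTop 1] with k hk
  apply ENNReal.ofReal_le_ofReal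
  have hk' : (k : ℝ) ≠ 0 := by positivity
  calc ‖L ^ k‖ ^ (1 / k : ℝ) ≤ (C * c ^ k) ^ (1 / k : ℝ) :=
        Real.rpow_le_rpow (norm_nonneg _) (h k) (by positivity)
    _ = C ^ (1 / k : ℝ) * c := by
        rw [Real.mul_rpow hC.le (by positivity), ← Real.rpow_natCast, ← Real.rpow_mul hc.le,
          mul_one_div_cancel hk', Real.rpow_one]

lemma aux_left {H K : Type*} [NormedAddCommGroup H] [InnerProductSpace ℂ H] [CompleteSpace H]
    [NormedAddCommGroup K] [InnerProductSpace ℂ K] [CompleteSpace K]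
    (T : H →L[ℂ] H) (V : H →L[ℂ] K) (c : ℝ) (hc : 0 < c) (h1 : ∀ x, ‖x‖ ≤ ‖V x‖)
    (h2 : ∀ x, ‖V x‖ ≤ c * ‖V (T x)‖) :
    ∃ L : H →L[ℂ] H, L * T = 1 ∧ spectralRadius ℂ L ≤ ENNReal.ofReal c := by
  let A : H →L[ℂ] K := V.comp T
  have hA : AntilipschitzWith c.toNNReal A := by
    refine A.antilipschitz_of_bound fun x => ?_
    rw [Real.coe_toNNReal _ hc.le]
    exact (h1 x).trans (h2 x)
  have hinj := hA.injective
  have hclo : IsClosed (Set.range A) := hA.isClosed_range A.uniformContinuous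
  haveI : CompleteSpace A.range := hclo.completeSpace_coe
  let e := A.equivRange hinj hclo
  let L : H →L[ℂ] H :=
    (e.symm : A.range →L[ℂ] H).comp ((A.range.orthogonalProjectionOnto).comp V)
  have hLT : ∀ x, V (T (L x)) = A.range.orthogonalProjectionOnto (V x) := by
    intro x
    have : e (L x) = A.range.orthogonalProjectionOnto (V x) := by simp [L]
    rw [← this]; rfl
  have hVL : ∀ x, ‖V (L x)‖ ≤ c * ‖V x‖ := by
    intro x
    refine (h2 _).trans ?_
    rw [hLT]
    gcongr
    exact A.range.norm_orthogonalProjectionOnto_apply_le (V x)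
  have hVk : ∀ k x, ‖V ((L ^ k) x)‖ ≤ c ^ k * ‖V x‖ := by
    intro k
    induction k with
    | zero => intro x; simp
    | succ k ih =>
      intro x
      rw [pow_succ', ContinuousLinearMap.mul_apply]
      calc _ ≤ c * ‖V ((L ^ k) x)‖ := hVL _
        _ ≤ c * (c ^ k * ‖V x‖) := by gcongr; exact ih x
        _ = _ := by ring
  refine ⟨L, ?_, ?_⟩
  · ext x
    have hm : A x ∈ A.range := ⟨x, rfl⟩
    have h5 : A.range.orthogonalProjectionOnto (V (T x)) = e x :=
      A.range.orthogonalProjectionOnto_mem_subspace_eq_self (e x)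
    change e.symm (A.range.orthogonalProjectionOnto (V (T x))) = x
    rw [h5]; simp
  · refine aux_radius L (‖V‖ + 1) c (by positivity) hc fun k => ?_
    refine ContinuousLinearMap.opNorm_le_bound _ (by positivity) fun x => ?_
    calc _ ≤ _ := h1 _
      _ ≤ _ := hVk k x
      _ ≤ c ^ k * ((‖V‖ + 1) * ‖x‖) := by
        gcongr
        exact (V.le_opNorm x).trans (by gcongr; linarith)
      _ = _ := by ring

lemma aux_bdd {H : Type*} [NormedAddCommGroup H] [InnerProductSpace ℂ H] [CompleteSpace H]
    (T : H →L[ℂ] H) (m : ℕ) (hm : 1 ≤ m) (c : ℝ) (hc : 0 < c)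
    (h : ∀ x, ‖x‖ ≤ c ^ m * ‖(T ^ m) x‖) :
    ∃ L : H →L[ℂ] H, L * T = 1 ∧ spectralRadius ℂ L ≤ ENNReal.ofReal c := by
  let V : H →L[ℂ] PiLp 2 (fun _ : Fin m => H) :=
    ((PiLp.continuousLinearEquiv 2 ℂ (fun _ : Fin m => H)).symm :
      (Fin m → H) →L[ℂ] PiLp 2 (fun _ : Fin m => H)).comp
      (ContinuousLinearMap.pi fun k : Fin m => ((c : ℂ) ^ (k : ℕ)) • T ^ (k : ℕ))
  have hV : ∀ x, ‖V x‖ ^ 2 = ∑ k ∈ Finset.range m, (c ^ k * ‖(T ^ k) x‖) ^ 2 := by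
    intro x
    rw [PiLp.norm_sq_eq_of_L2, Finset.sum_range]
    refine Finset.sum_congr rfl fun k _ => ?_
    have : V x k = ((c : ℂ) ^ (k : ℕ)) • (T ^ (k : ℕ)) x := rfl
    rw [this, norm_smul, norm_pow, Complex.norm_real, Real.norm_of_nonneg hc.le]
  refine aux_left T V c hc ?_ ?_
  · intro x
    refine le_of_sq_le_sq ?_ (norm_nonneg _)
    rw [hV]
    have := Finset.single_le_sum (f := fun k => (c ^ k * ‖(T ^ k) x‖) ^ 2)
      (fun i _ => sq_nonneg _) (Finset.mem_range.2 hm)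
    simpa using this
  · intro x
    refine le_of_sq_le_sq ?_ (by positivity)
    rw [mul_pow, hV, hV, Finset.mul_sum]
    have h6 : ∀ k, c ^ 2 * (c ^ k * ‖(T ^ k) (T x)‖) ^ 2
        = (c ^ (k + 1) * ‖(T ^ (k + 1)) x‖) ^ 2 := by
      intro k
      rw [pow_succ T, ContinuousLinearMap.mul_apply]; ring
    simp_rw [h6]
    have h7 := Finset.sum_range_succ (fun k => (c ^ k * ‖(T ^ k) x‖) ^ 2) m
    rw [Finset.sum_range_succ'] at h7
    have h8 : ‖x‖ ^ 2 ≤ (c ^ m * ‖(T ^ m) x‖) ^ 2 := by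
      gcongr
      exact h x
    simp only [pow_zero, one_mul, ContinuousLinearMap.one_apply] at h7
    linarith

lemma aux_pow {H : Type*} [NormedAddCommGroup H] [InnerProductSpace ℂ H] [CompleteSpace H]
    (T S : H →L[ℂ] H) (n : ℕ) (hn : 1 ≤ n) (hS : S * T ^ n = 1) (c : ℝ) (hc : 0 < c)
    (h : spectralRadius ℂ S < ENNReal.ofReal (c ^ n)) :
    ∃ L : H →L[ℂ] H, L * T = 1 ∧ spectralRadius ℂ L ≤ ENNReal.ofReal c := by
  have h1 := spectrum.pow_norm_pow_one_div_tendsto_nhds_spectralRadius S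
  obtain ⟨N, hN, hN1⟩ := ((h1.eventually_lt_const h).and (eventually_ge_atTop 1)).exists
  have hN2 : ‖S ^ N‖ ≤ c ^ (n * N) := by
    have h2 := (ENNReal.ofReal_lt_ofReal_iff (by positivity)).1 hN
    have hN' : (N : ℝ) ≠ 0 := by positivity
    have h3 : (‖S ^ N‖ ^ (1 / N : ℝ)) ^ N ≤ (c ^ n) ^ N := by gcongr
    rwa [← Real.rpow_natCast, ← Real.rpow_mul (norm_nonneg _), one_div_mul_cancel hN',
      Real.rpow_one, ← pow_mul] at h3
  have hST : ∀ N : ℕ, S ^ N * (T ^ n) ^ N = 1 := by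
    intro N
    induction N with
    | zero => simp
    | succ k ih =>
      rw [pow_succ, pow_succ', mul_assoc, ← mul_assoc S, hS, one_mul, ih]
  refine aux_bdd T (n * N) (Nat.mul_pos hn hN1) c hc fun x => ?_
  have h4 : (S ^ N) ((T ^ (n * N)) x) = x := by
    rw [← ContinuousLinearMap.mul_apply, pow_mul, hST]; rfl
  calc ‖x‖ = ‖(S ^ N) ((T ^ (n * N)) x)‖ := by rw [h4]
    _ ≤ ‖S ^ N‖ * ‖(T ^ (n * N)) x‖ := (S ^ N).le_opNorm _
    _ ≤ _ := by gcongr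

theorem s_of_pow_eq_pow_of_s
    {H : Type*} [NormedAddCommGroup H] [InnerProductSpace ℂ H] [CompleteSpace H]
    [TopologicalSpace.SeparableSpace H]
    (T : H →L[ℂ] H) (hT : ∃ S : H →L[ℂ] H, S * T = 1) :
    ∀ n : ℕ, 1 ≤ n →
      (⨆ S ∈ {S : H →L[ℂ] H | S * T ^ n = 1}, (spectralRadius ℂ S)⁻¹) =
        (⨆ S ∈ {S : H →L[ℂ] H | S * T = 1}, (spectralRadius ℂ S)⁻¹) ^ n := by
  intro n hn
  have hn0 : n ≠ 0 := by omega
  apply le_antisymm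
  · refine iSup₂_le fun S hS => ?_
    by_contra! hlt
    have hlt' := ENNReal.lt_inv_iff_lt_inv.1 hlt
    obtain ⟨b, hb1, hb2⟩ := ENNReal.lt_iff_exists_nnreal_btwn.1 hlt'
    have hb0 : 0 < (b : ℝ) := by
      have : (0 : ℝ≥0∞) < b := lt_of_le_of_lt bot_le hb1
      exact_mod_cast this
    set c : ℝ := (b : ℝ) ^ (1 / n : ℝ) with hcdef
    have hc : 0 < c := by positivity
    have hcn : c ^ n = b := by
      rw [hcdef, ← Real.rpow_natCast, ← Real.rpow_mul hb0.le,
        one_div_mul_cancel (by exact_mod_cast hn0), Real.rpow_one]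
    obtain ⟨L, hL, hLc⟩ := aux_pow T S n hn hS c hc (by rw [hcn]; simpa using hb1)
    have h1 : (ENNReal.ofReal c)⁻¹ ≤
        ⨆ S ∈ {S : H →L[ℂ] H | S * T = 1}, (spectralRadius ℂ S)⁻¹ :=
      (ENNReal.inv_le_inv.2 hLc).trans
        (le_iSup₂ (f := fun (S : H →L[ℂ] H) (_ : S ∈ {S : H →L[ℂ] H | S * T = 1}) =>
          (spectralRadius ℂ S)⁻¹) L hL)
    have h2 := pow_le_pow_left' h1 n
    rw [← ENNReal.inv_pow, ← ENNReal.ofReal_pow hc.le, hcn, ENNReal.ofReal_coe_nnreal] at h2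
    have h3 := ENNReal.lt_inv_iff_lt_inv.1 hb2
    exact absurd h3 (not_lt.2 h2)
  · rw [ENNReal.iSup₂_pow_of_ne_zero _ hn0]
    refine iSup₂_le fun S hS => ?_
    have hSn : ∀ k : ℕ, S ^ k * T ^ k = 1 := by
      intro k
      induction k with
      | zero => simp
      | succ k ih =>
        rw [pow_succ, pow_succ', mul_assoc, ← mul_assoc S, hS, one_mul, ih]
    refine le_iSup₂_of_le (S ^ n) (hSn n) ?_
    rw [← ENNReal.inv_pow]
    refine ENNReal.inv_le_inv.2 ?_
    unfold spectralRadius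
    rw [ENNReal.iSup₂_pow_of_ne_zero _ hn0]
    refine iSup₂_le fun z hz => ?_
    rw [spectrum.map_pow_of_pos S hn] at hz
    obtain ⟨w, hw, rfl⟩ := hz
    refine le_iSup₂_of_le w hw ?_
    simp
end
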